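/- Let ε > 0, T > 0 and M > 0. For i = 1,2 let uᵢ : [0,T] × ℝ³ → ℝ³ be continuous and ℤ³-periodic in the space variable with continuous spatial derivatives up to order two, satisfying sup_{t∈[0,T]} ( sup_x |uᵢ(t,x)| + sup_x |∇uᵢ(t,x)| ) ≤ M; let ρᵢ : [0,T] × ℝ³ → ℝ be ℤ³-periodic in x, continuously differentiable in t and twice continuously differentiable in x, solving ∂ₜρᵢ + div(ρᵢ uᵢ) = ε Δρᵢ pointwise on (0,T) × ℝ³, with ρ₁(0,·) = ρ₂(0,·) and sup_{t∈[0,T]} ( sup_x |ρᵢ(t,x)| + sup_x |∇ρᵢ(t,x)| + sup_x |∇²ρᵢ(t,x)| ) ≤ M. Then there exists a constant C, depending only on ε, T and M, such that sup_{t∈[0,T]} ‖ρ₁(t,·) − ρ₂(t,·)‖_{W^{1,2}(𝕋³)} ≤ C · sup_{t∈[0,T]} ‖u₁(t,·) − u₂(t,·)‖_{W^{1,2}(𝕋³)}. -/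

import Mathlib

/-!
The proof is an energy estimate for `w = ρ₁ - ρ₂`, which solves `∂ₜw = εΔw - F` with
`F = div(ρ₁u₁ - ρ₂u₂)`. Writing `ρ₁u₁ - ρ₂u₂ = w u₁ + ρ₂ (u₁ - u₂)` gives
`F² ≤ 36M² (w² + |∇w|² + |u₁ - u₂|² + |∇(u₁ - u₂)|²)` pointwise (`flux_sq_le`).

Let `E(t) = ∫ (w² + |∇w|²)`. Formally `E' = 2∫ ∂ₜw (w - Δw)`, but `∂ₜ∇w` need not exist.
Polarisation and Green's identity on the torus (`integral_box_green`, from the divergence theorem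
on the unit cube) give instead the exact formula
`E(t) - E(s) = ∫ (w(t) - w(s)) (w(t) + w(s) - Δw(t) - Δw(s))` (`energy_sub_energy`), and dominated
convergence yields the derivative of `E` (`hasDerivWithinAt_energy`).

Inserting the equation, `∫ wΔw = -∫ |∇w|² ≤ 0`, and `2FΔw ≤ F²/(2ε) + 2ε|Δw|²` is absorbed by the
dissipation. Hence `E' ≤ K (E + D²)` on `(0,T)` (`energy_deriv_le`), where `D` is the supremum in
time of the `W^{1,2}` norm of `u₁ - u₂` and `K` depends on `ε` and `M` only. As `E(0) = 0`,
Grönwall's inequality gives `E(t) ≤ exp(KT) D²`, and the constant `C = exp(KT)^{1/2}` works.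
-/

open MeasureTheory Set Filter BigOperators

/-- The `i`-th spatial partial derivative of a scalar field on `ℝ³`. -/
noncomputable def pd (i : Fin 3) (g : (Fin 3 → ℝ) → ℝ) (x : Fin 3 → ℝ) : ℝ :=
  fderiv ℝ g x (Pi.single i 1)

/-- Divergence of a vector field on `ℝ³`. -/
noncomputable def divg (v : (Fin 3 → ℝ) → (Fin 3 → ℝ)) (x : Fin 3 → ℝ) : ℝ :=
  ∑ i, pd i (fun y => v y i) x

/-- Laplacian of a scalar field on `ℝ³`. -/
noncomputable def lap (g : (Fin 3 → ℝ) → ℝ) (x : Fin 3 → ℝ) : ℝ :=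
  ∑ i, pd i (pd i g) x

/-- `ℤ³`-periodicity: the model for functions on the torus `𝕋³`. -/
def PeriodicSpace {α : Type*} (f : (Fin 3 → ℝ) → α) : Prop :=
  ∀ (x : Fin 3 → ℝ) (z : Fin 3 → ℤ), f (x + fun i => (z i : ℝ)) = f x

/-- A velocity field on `[0,T] × ℝ³`: continuous, `ℤ³`-periodic in space, with all
spatial partial derivatives up to order two existing and continuous on `[0,T] × ℝ³`. -/
structure RegVel (T : ℝ) (u : ℝ → (Fin 3 → ℝ) → (Fin 3 → ℝ)) : Prop where
  periodic : ∀ t ∈ Set.Icc (0:ℝ) T, PeriodicSpace (u t)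
  smoothSpace : ∀ t ∈ Set.Icc (0:ℝ) T, ContDiff ℝ 2 (u t)
  cont0 : ContinuousOn (fun p : ℝ × (Fin 3 → ℝ) => u p.1 p.2) (Set.Icc 0 T ×ˢ Set.univ)
  cont1 : ∀ i j, ContinuousOn (fun p : ℝ × (Fin 3 → ℝ) => pd i (fun y => u p.1 y j) p.2)
      (Set.Icc 0 T ×ˢ Set.univ)
  cont2 : ∀ i j k, ContinuousOn
      (fun p : ℝ × (Fin 3 → ℝ) => pd i (pd j (fun y => u p.1 y k)) p.2)
      (Set.Icc 0 T ×ˢ Set.univ)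

/-- A density on `[0,T] × ℝ³`: `ℤ³`-periodic in space, continuously differentiable in `t`,
twice continuously differentiable in `x`, all derivatives continuous on `[0,T] × ℝ³`. -/
structure RegDens (T : ℝ) (ρ : ℝ → (Fin 3 → ℝ) → ℝ) : Prop where
  periodic : ∀ t ∈ Set.Icc (0:ℝ) T, PeriodicSpace (ρ t)
  smoothSpace : ∀ t ∈ Set.Icc (0:ℝ) T, ContDiff ℝ 2 (ρ t)
  diffTime : ∀ x, ∀ t ∈ Set.Icc (0:ℝ) T, DifferentiableAt ℝ (fun s => ρ s x) t
  cont0 : ContinuousOn (fun p : ℝ × (Fin 3 → ℝ) => ρ p.1 p.2) (Set.Icc 0 T ×ˢ Set.univ)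
  contT : ContinuousOn (fun p : ℝ × (Fin 3 → ℝ) => deriv (fun s => ρ s p.2) p.1)
      (Set.Icc 0 T ×ˢ Set.univ)
  cont1 : ∀ i, ContinuousOn (fun p : ℝ × (Fin 3 → ℝ) => pd i (ρ p.1) p.2)
      (Set.Icc 0 T ×ˢ Set.univ)
  cont2 : ∀ i j, ContinuousOn (fun p : ℝ × (Fin 3 → ℝ) => pd i (pd j (ρ p.1)) p.2)
      (Set.Icc 0 T ×ˢ Set.univ)

/-- The viscous continuity equation `∂ₜρ + div(ρu) = ε Δρ`, pointwise on `(0,T) × ℝ³`. -/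
def SolvesViscousContinuity (ε T : ℝ) (ρ : ℝ → (Fin 3 → ℝ) → ℝ)
    (u : ℝ → (Fin 3 → ℝ) → (Fin 3 → ℝ)) : Prop :=
  ∀ t ∈ Set.Ioo (0:ℝ) T, ∀ x : Fin 3 → ℝ,
    deriv (fun s => ρ s x) t + divg (fun y => ρ t y • u t y) x = ε * lap (ρ t) x


/-- The fundamental domain `[0,1)³` of the torus `𝕋³`. -/
def box : Set (Fin 3 → ℝ) := Set.univ.pi fun _ => Set.Ico (0:ℝ) 1

/-- The `W^{1,2}(𝕋³)` norm of a scalar field. -/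
noncomputable def sobNormS (g : (Fin 3 → ℝ) → ℝ) : ℝ :=
  Real.sqrt (∫ x in box, (g x ^ 2 + ∑ i, pd i g x ^ 2))

/-- The `W^{1,2}(𝕋³)` norm of a vector field. -/
noncomputable def sobNormV (g : (Fin 3 → ℝ) → (Fin 3 → ℝ)) : ℝ :=
  Real.sqrt (∫ x in box, ((∑ j, g x j ^ 2) + ∑ i, ∑ j, pd i (fun y => g y j) x ^ 2))

open scoped Topology

/-! ### Partial derivatives -/

theorem pd_fun_sub {f g : (Fin 3 → ℝ) → ℝ} {x : Fin 3 → ℝ} (i : Fin 3)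
    (hf : DifferentiableAt ℝ f x) (hg : DifferentiableAt ℝ g x) :
    pd i (fun y => f y - g y) x = pd i f x - pd i g x := by
  unfold pd; rw [fderiv_fun_sub hf hg]; rfl

theorem pd_fun_add {f g : (Fin 3 → ℝ) → ℝ} {x : Fin 3 → ℝ} (i : Fin 3)
    (hf : DifferentiableAt ℝ f x) (hg : DifferentiableAt ℝ g x) :
    pd i (fun y => f y + g y) x = pd i f x + pd i g x := by
  unfold pd; rw [fderiv_fun_add hf hg]; rfl

theorem pd_fun_mul {f g : (Fin 3 → ℝ) → ℝ} {x : Fin 3 → ℝ} (i : Fin 3)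
    (hf : DifferentiableAt ℝ f x) (hg : DifferentiableAt ℝ g x) :
    pd i (fun y => f y * g y) x = pd i f x * g x + f x * pd i g x := by
  unfold pd; rw [fderiv_fun_mul hf hg]
  simp only [add_apply, smul_apply, smul_eq_mul]
  ring

theorem contDiff_pd {g : (Fin 3 → ℝ) → ℝ} (hg : ContDiff ℝ 2 g) (i : Fin 3) :
    ContDiff ℝ 1 (pd i g) :=
  (hg.fderiv_right (m := 1) (by norm_num)).clm_apply contDiff_const

theorem continuous_pd {g : (Fin 3 → ℝ) → ℝ} (hg : ContDiff ℝ 1 g) (i : Fin 3) :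
    Continuous (pd i g) :=
  (hg.continuous_fderiv (by norm_num)).clm_apply continuous_const

theorem continuous_lap {g : (Fin 3 → ℝ) → ℝ} (hg : ContDiff ℝ 2 g) : Continuous (lap g) :=
  continuous_finsetSum _ fun i _ => continuous_pd (contDiff_pd hg i) i

theorem periodicSpace_pd {g : (Fin 3 → ℝ) → ℝ} (hg : PeriodicSpace g) (i : Fin 3) :
    PeriodicSpace (pd i g) := by
  intro x z
  unfold pd
  rw [← fderiv_comp_add_right]
  congr 2
  funext y
  exact hg y z

theorem pd_pd_fun_sub {f g : (Fin 3 → ℝ) → ℝ} (hf : ContDiff ℝ 2 f) (hg : ContDiff ℝ 2 g)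
    (i j : Fin 3) (x : Fin 3 → ℝ) :
    pd i (pd j (fun y => f y - g y)) x = pd i (pd j f) x - pd i (pd j g) x := by
  have h : pd j (fun y => f y - g y) = fun y => pd j f y - pd j g y := by
    funext y
    exact pd_fun_sub j (hf.differentiable (by norm_num) y) (hg.differentiable (by norm_num) y)
  rw [h]
  exact pd_fun_sub i ((contDiff_pd hf j).differentiable (by norm_num) x)
    ((contDiff_pd hg j).differentiable (by norm_num) x)

theorem pd_pd_fun_add {f g : (Fin 3 → ℝ) → ℝ} (hf : ContDiff ℝ 2 f) (hg : ContDiff ℝ 2 g)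
    (i j : Fin 3) (x : Fin 3 → ℝ) :
    pd i (pd j (fun y => f y + g y)) x = pd i (pd j f) x + pd i (pd j g) x := by
  have h : pd j (fun y => f y + g y) = fun y => pd j f y + pd j g y := by
    funext y
    exact pd_fun_add j (hf.differentiable (by norm_num) y) (hg.differentiable (by norm_num) y)
  rw [h]
  exact pd_fun_add i ((contDiff_pd hf j).differentiable (by norm_num) x)
    ((contDiff_pd hg j).differentiable (by norm_num) x)

/-! ### Integration by parts on the torus -/

theorem box_subset_Icc : box ⊆ Icc (0 : Fin 3 → ℝ) 1 := by
  intro x hx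
  exact ⟨fun i => (hx i (mem_univ i)).1, fun i => (hx i (mem_univ i)).2.le⟩

theorem measurableSet_box : MeasurableSet box :=
  MeasurableSet.univ_pi fun _ => measurableSet_Ico

theorem volume_box : volume box = 1 := by
  have h := Real.volume_pi_Ico (a := (0 : Fin 3 → ℝ)) (b := 1)
  simpa [box] using h

theorem integrableOn_box {f : (Fin 3 → ℝ) → ℝ} (hf : Continuous f) : IntegrableOn f box :=
  (hf.continuousOn.integrableOn_compact isCompact_Icc).mono_set box_subset_Icc

/-- The divergence theorem on the torus: opposite faces of the unit cube cancel. -/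
theorem integral_box_divergence (F : Fin 3 → (Fin 3 → ℝ) → ℝ)
    (hF : ∀ i, ContDiff ℝ 1 (F i)) (hp : ∀ i, PeriodicSpace (F i)) :
    ∫ x in box, ∑ i, pd i (F i) x = 0 := by
  have hae : box =ᵐ[volume] Icc (0 : Fin 3 → ℝ) 1 :=
    Measure.univ_pi_Ico_ae_eq_Icc (μ := fun _ : Fin 3 => (volume : Measure ℝ))
      (f := (0 : Fin 3 → ℝ)) (g := 1)
  rw [setIntegral_congr_set hae]
  have hcont : Continuous fun x => ∑ i, pd i (F i) x :=
    continuous_finsetSum _ fun i _ => continuous_pd (hF i) i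
  have h := integral_divergence_of_hasFDerivAt_off_countable' (n := 2) (0 : Fin 3 → ℝ) 1
    zero_le_one F (fun i x => fderiv ℝ (F i) x) ∅ countable_empty
    (fun i => (hF i).continuous.continuousOn)
    (fun x _ i => ((hF i).differentiable (by norm_num) x).hasFDerivAt)
    (hcont.continuousOn.integrableOn_compact isCompact_Icc)
  refine h.trans (Finset.sum_eq_zero fun i _ => ?_)
  rw [sub_eq_zero]
  congr 1
  funext y
  rw [← hp i (i.insertNth ((0 : Fin 3 → ℝ) i) y) (Pi.single i 1)]
  congr 1
  funext j
  rcases Fin.eq_self_or_eq_succAbove i j with rfl | ⟨k, rfl⟩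
  · simp
  · simp [Pi.single_apply, Fin.succAbove_ne]

/-- Green's identity on the torus. -/
theorem integral_box_green {f g : (Fin 3 → ℝ) → ℝ} (hf : ContDiff ℝ 2 f) (hg : ContDiff ℝ 2 g)
    (pf : PeriodicSpace f) (pg : PeriodicSpace g) :
    ∫ x in box, (f x * lap g x + ∑ i, pd i f x * pd i g x) = 0 := by
  have hf1 : ContDiff ℝ 1 f := hf.of_le (by norm_num)
  rw [← integral_box_divergence (fun i x => f x * pd i g x)
    (fun i => hf1.mul (contDiff_pd hg i))
    (fun i x z => by simp only [pf x z, periodicSpace_pd pg i x z])]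
  congr 1
  funext x
  have h : ∀ i, pd i (fun x => f x * pd i g x) x = pd i f x * pd i g x + f x * pd i (pd i g) x :=
    fun i => pd_fun_mul i (hf1.differentiable (by norm_num) x)
      ((contDiff_pd hg i).differentiable (by norm_num) x)
  simp only [h, lap, Finset.sum_add_distrib, Finset.mul_sum]
  ring

/-! ### The `W^{1,2}` energy and its time derivative -/

/-- The square of the `W^{1,2}(𝕋³)` norm of a scalar field. -/
noncomputable def energy (g : (Fin 3 → ℝ) → ℝ) : ℝ :=
  ∫ x in box, (g x ^ 2 + ∑ i, pd i g x ^ 2)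

theorem continuous_energyDensity {g : (Fin 3 → ℝ) → ℝ} (hg : ContDiff ℝ 2 g) :
    Continuous fun x => g x ^ 2 + ∑ i, pd i g x ^ 2 :=
  (hg.continuous.pow 2).add (continuous_finsetSum _ fun i _ =>
    (continuous_pd (hg.of_le (by norm_num)) i).pow 2)

/-- Polarisation of the energy followed by Green's identity. No derivative of `f - g` remains,
which is what allows differentiation in time without a mixed derivative `∂ₜ∇`. -/
theorem energy_sub_energy {f g : (Fin 3 → ℝ) → ℝ} (hf : ContDiff ℝ 2 f) (hg : ContDiff ℝ 2 g)
    (pf : PeriodicSpace f) (pg : PeriodicSpace g) :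
    energy f - energy g =
      ∫ x in box, (f x - g x) * ((f x + g x) - (lap f x + lap g x)) := by
  have hd := hf.sub hg
  have hs := hf.add hg
  have green := integral_box_green (f := fun x => f x - g x) (g := fun x => f x + g x) hd hs
    (fun x z => by simp only [pf x z, pg x z]) (fun x z => by simp only [pf x z, pg x z])
  have hlap : ∀ x, lap (fun x => f x + g x) x = lap f x + lap g x := fun x => by
    simp only [lap, pd_pd_fun_add hf hg, Finset.sum_add_distrib]
  have df := hf.differentiable (by norm_num)
  have dg := hg.differentiable (by norm_num)
  have hcl := (continuous_lap hf).add (continuous_lap hg)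
  have e1 : Continuous fun x => (f x - g x) * ((f x + g x) - (lap f x + lap g x)) :=
    (hf.continuous.sub hg.continuous).mul ((hf.continuous.add hg.continuous).sub hcl)
  have e2 : Continuous fun x => (f x ^ 2 + ∑ i, pd i f x ^ 2) - (g x ^ 2 + ∑ i, pd i g x ^ 2) :=
    (continuous_energyDensity hf).sub (continuous_energyDensity hg)
  unfold energy
  rw [← integral_sub (integrableOn_box (continuous_energyDensity hf))
    (integrableOn_box (continuous_energyDensity hg)), ← sub_eq_zero,
    ← integral_sub (integrableOn_box e2) (integrableOn_box e1), ← green]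
  congr 1
  funext x
  simp only [hlap, pd_fun_sub _ (df x) (dg x), pd_fun_add _ (df x) (dg x), Fin.sum_univ_three]
  ring

theorem hasDerivWithinAt_energy {T : ℝ} {w : ℝ → (Fin 3 → ℝ) → ℝ}
    (hw : RegDens T w) {s : ℝ} (hs : s ∈ Icc (0 : ℝ) T) :
    HasDerivWithinAt (fun t => energy (w t))
      (∫ x in box, deriv (fun r => w r x) s * (2 * w s x - 2 * lap (w s) x)) (Icc 0 T) s := by
  rw [hasDerivWithinAt_iff_tendsto_slope]
  have hK : IsCompact (Icc (0 : ℝ) T ×ˢ Icc (0 : Fin 3 → ℝ) 1) := isCompact_Icc.prod isCompact_Icc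
  have hsub : Icc (0 : ℝ) T ×ˢ Icc (0 : Fin 3 → ℝ) 1 ⊆ Icc (0 : ℝ) T ×ˢ univ :=
    prod_mono_right (subset_univ _)
  have hclap : ContinuousOn (fun p : ℝ × (Fin 3 → ℝ) => w p.1 p.2 - lap (w p.1) p.2)
      (Icc (0 : ℝ) T ×ˢ univ) :=
    hw.cont0.sub (continuousOn_finsetSum _ fun i _ => hw.cont2 i i)
  obtain ⟨A, hA⟩ := hK.exists_bound_of_continuousOn (hw.contT.mono hsub)
  obtain ⟨B, hB⟩ := hK.exists_bound_of_continuousOn (hclap.mono hsub)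
  have hmem : ∀ᶠ t in 𝓝[Icc 0 T \ {s}] s, t ∈ Icc (0 : ℝ) T \ {s} := self_mem_nhdsWithin
  have heq : ∀ t ∈ Icc (0 : ℝ) T \ {s}, slope (fun t => energy (w t)) s t =
      ∫ x in box, slope (fun r => w r x) s t *
        ((w t x - lap (w t) x) + (w s x - lap (w s) x)) := by
    intro t ht
    rw [slope_def_field, energy_sub_energy (hw.smoothSpace t ht.1) (hw.smoothSpace s hs)
      (hw.periodic t ht.1) (hw.periodic s hs), ← integral_div]
    congr 1
    funext x
    rw [slope_def_field]
    ring
  refine Tendsto.congr' (f₁ := fun t => ∫ x in box, slope (fun r => w r x) s t *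
        ((w t x - lap (w t) x) + (w s x - lap (w s) x)))
    (hmem.mono fun t ht => (heq t ht).symm) ?_
  refine tendsto_integral_filter_of_dominated_convergence (fun _ => A * (B + B)) ?_ ?_ ?_ ?_
  · refine hmem.mono fun t ht => ?_
    have ct := hw.smoothSpace t ht.1
    have cs := hw.smoothSpace s hs
    have c : Continuous fun x => slope (fun r => w r x) s t *
        ((w t x - lap (w t) x) + (w s x - lap (w s) x)) := by
      simp only [slope_def_field]
      exact ((ct.continuous.sub cs.continuous).div_const _).mul
        ((ct.continuous.sub (continuous_lap ct)).add (cs.continuous.sub (continuous_lap cs)))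
    exact c.aestronglyMeasurable
  · refine hmem.mono fun t ht => (ae_restrict_iff' measurableSet_box).2 (.of_forall fun x hx => ?_)
    have hx' := box_subset_Icc hx
    have hmv := (convex_Icc (0 : ℝ) T).norm_image_sub_le_of_norm_deriv_le
      (f := fun r => w r x) (C := A) (fun r hr => hw.diffTime x r hr)
      (fun r hr => hA (r, x) ⟨hr, hx'⟩) hs ht.1
    have hpos : 0 < ‖t - s‖ := norm_pos_iff.2 (sub_ne_zero.2 ht.2)
    have h1 : ‖slope (fun r => w r x) s t‖ ≤ A := by
      rw [slope_def_field, norm_div, div_le_iff₀ hpos]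
      exact hmv
    rw [norm_mul]
    refine mul_le_mul h1 ((norm_add_le _ _).trans (add_le_add (hB (t, x) ⟨ht.1, hx'⟩)
      (hB (s, x) ⟨hs, hx'⟩))) (norm_nonneg _) ((norm_nonneg _).trans h1)
  · exact integrableOn_box continuous_const
  · refine .of_forall fun x => ?_
    have h1 : Tendsto (slope (fun r => w r x) s) (𝓝[Icc 0 T \ {s}] s)
        (𝓝 (deriv (fun r => w r x) s)) :=
      hasDerivWithinAt_iff_tendsto_slope.1 (hw.diffTime x s hs).hasDerivAt.hasDerivWithinAt
    have h2 : ContinuousOn (fun t => w t x - lap (w t) x) (Icc 0 T) :=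
      hclap.comp (f := fun t : ℝ => (t, x)) (by fun_prop) fun t ht => ⟨ht, mem_univ _⟩
    have h3 : Tendsto (fun t => w t x - lap (w t) x) (𝓝[Icc 0 T \ {s}] s)
        (𝓝 (w s x - lap (w s) x)) :=
      (h2 s hs).tendsto.mono_left (nhdsWithin_mono _ sdiff_subset)
    have h4 := h1.mul (h3.add_const (w s x - lap (w s) x))
    convert h4 using 2
    ring

/-! ### The energy estimate -/

theorem RegDens.fun_sub {T : ℝ} {ρ₁ ρ₂ : ℝ → (Fin 3 → ℝ) → ℝ}
    (h₁ : RegDens T ρ₁) (h₂ : RegDens T ρ₂) : RegDens T (fun t x => ρ₁ t x - ρ₂ t x) where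
  periodic t ht x z := by simp only [h₁.periodic t ht x z, h₂.periodic t ht x z]
  smoothSpace t ht := (h₁.smoothSpace t ht).sub (h₂.smoothSpace t ht)
  diffTime x t ht := (h₁.diffTime x t ht).sub (h₂.diffTime x t ht)
  cont0 := h₁.cont0.sub h₂.cont0
  contT := (h₁.contT.sub h₂.contT).congr fun p hp =>
    deriv_fun_sub (h₁.diffTime p.2 p.1 hp.1) (h₂.diffTime p.2 p.1 hp.1)
  cont1 i := ((h₁.cont1 i).sub (h₂.cont1 i)).congr fun p hp =>
    pd_fun_sub i ((h₁.smoothSpace p.1 hp.1).differentiable (by norm_num) p.2)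
      ((h₂.smoothSpace p.1 hp.1).differentiable (by norm_num) p.2)
  cont2 i j := ((h₁.cont2 i j).sub (h₂.cont2 i j)).congr fun p hp =>
    pd_pd_fun_sub (h₁.smoothSpace p.1 hp.1) (h₂.smoothSpace p.1 hp.1) i j p.2

/-- The flux difference splits as `ρ₁u₁ - ρ₂u₂ = (ρ₁ - ρ₂)u₁ + ρ₂(u₁ - u₂)`, so its divergence is
linear in the differences with coefficients bounded by `M`. -/
theorem flux_sq_le {M : ℝ} {r₁ r₂ : (Fin 3 → ℝ) → ℝ} {v₁ v₂ : (Fin 3 → ℝ) → (Fin 3 → ℝ)}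
    (hr₁ : Differentiable ℝ r₁) (hr₂ : Differentiable ℝ r₂)
    (hv₁ : Differentiable ℝ v₁) (hv₂ : Differentiable ℝ v₂) (x : Fin 3 → ℝ)
    (b1 : ∀ i, |v₁ x i| ≤ M) (b2 : ∀ i, |pd i (fun y => v₁ y i) x| ≤ M)
    (b3 : |r₂ x| ≤ M) (b4 : ∀ i, |pd i r₂ x| ≤ M) :
    (divg (fun y => r₁ y • v₁ y) x - divg (fun y => r₂ y • v₂ y) x) ^ 2 ≤
      36 * M ^ 2 * (((r₁ x - r₂ x) ^ 2 + ∑ i, pd i (fun y => r₁ y - r₂ y) x ^ 2) +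
        ((∑ j, (v₁ x - v₂ x) j ^ 2) + ∑ i, ∑ j, pd i (fun y => (v₁ y - v₂ y) j) x ^ 2)) := by
  have c₁ : ∀ i, DifferentiableAt ℝ (fun y => v₁ y i) x := fun i =>
    differentiableAt_pi.1 (hv₁ x) i
  have c₂ : ∀ i, DifferentiableAt ℝ (fun y => v₂ y i) x := fun i =>
    differentiableAt_pi.1 (hv₂ x) i
  have e₁ : ∀ i, pd i (fun y => (r₁ y • v₁ y) i) x =
      pd i r₁ x * v₁ x i + r₁ x * pd i (fun y => v₁ y i) x := fun i =>
    pd_fun_mul i (hr₁ x) (c₁ i)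
  have e₂ : ∀ i, pd i (fun y => (r₂ y • v₂ y) i) x =
      pd i r₂ x * v₂ x i + r₂ x * pd i (fun y => v₂ y i) x := fun i =>
    pd_fun_mul i (hr₂ x) (c₂ i)
  have e₃ : ∀ i, pd i (fun y => r₁ y - r₂ y) x = pd i r₁ x - pd i r₂ x := fun i =>
    pd_fun_sub i (hr₁ x) (hr₂ x)
  have e₄ : ∀ i j, pd i (fun y => (v₁ y - v₂ y) j) x =
      pd i (fun y => v₁ y j) x - pd i (fun y => v₂ y j) x := fun i j =>
    pd_fun_sub i (c₁ j) (c₂ j)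
  have sq : ∀ a b : ℝ, |a| ≤ M → (b * a) ^ 2 ≤ M ^ 2 * b ^ 2 := fun a b h => by
    rw [mul_pow, mul_comm]
    exact mul_le_mul_of_nonneg_right (sq_le_sq' (abs_le.1 h).1 (abs_le.1 h).2) (sq_nonneg b)
  have key : ∀ i, (pd i (fun y => (r₁ y • v₁ y) i) x - pd i (fun y => (r₂ y • v₂ y) i) x) ^ 2 ≤
      4 * M ^ 2 * (pd i (fun y => r₁ y - r₂ y) x ^ 2 + (r₁ x - r₂ x) ^ 2 + (v₁ x - v₂ x) i ^ 2
        + pd i (fun y => (v₁ y - v₂ y) i) x ^ 2) := by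
    intro i
    rw [e₁, e₂, e₃, e₄, Pi.sub_apply]
    have s1 := sq (v₁ x i) (pd i r₁ x - pd i r₂ x) (b1 i)
    have s2 := sq (pd i (fun y => v₁ y i) x) (r₁ x - r₂ x) (b2 i)
    have s3 := sq (pd i r₂ x) (v₁ x i - v₂ x i) (b4 i)
    have s4 := sq (r₂ x) (pd i (fun y => v₁ y i) x - pd i (fun y => v₂ y i) x) b3
    have four : ∀ a b c d : ℝ, (a + b + c + d) ^ 2 ≤ 4 * (a ^ 2 + b ^ 2 + c ^ 2 + d ^ 2) := by
      intro a b c d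
      nlinarith [sq_nonneg (a - b), sq_nonneg (a - c), sq_nonneg (a - d), sq_nonneg (b - c),
        sq_nonneg (b - d), sq_nonneg (c - d)]
    have h := four ((pd i r₁ x - pd i r₂ x) * v₁ x i)
      ((r₁ x - r₂ x) * pd i (fun y => v₁ y i) x) ((v₁ x i - v₂ x i) * pd i r₂ x)
      ((pd i (fun y => v₁ y i) x - pd i (fun y => v₂ y i) x) * r₂ x)
    calc _ = ((pd i r₁ x - pd i r₂ x) * v₁ x i + (r₁ x - r₂ x) * pd i (fun y => v₁ y i) x +
        (v₁ x i - v₂ x i) * pd i r₂ x +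
        (pd i (fun y => v₁ y i) x - pd i (fun y => v₂ y i) x) * r₂ x) ^ 2 := by ring
      _ ≤ _ := h
      _ ≤ _ := by linarith
  have three : ∀ a b c : ℝ, (a + b + c) ^ 2 ≤ 3 * (a ^ 2 + b ^ 2 + c ^ 2) := by
    intro a b c
    nlinarith [sq_nonneg (a - b), sq_nonneg (a - c), sq_nonneg (b - c)]
  have diag : ∑ i, pd i (fun y => (v₁ y - v₂ y) i) x ^ 2 ≤
      ∑ i, ∑ j, pd i (fun y => (v₁ y - v₂ y) j) x ^ 2 :=
    Finset.sum_le_sum fun i _ => Finset.single_le_sum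
      (f := fun j => pd i (fun y => (v₁ y - v₂ y) j) x ^ 2)
      (fun j _ => sq_nonneg _) (Finset.mem_univ i)
  have hM2 : 0 ≤ M ^ 2 := sq_nonneg M
  calc _ = (∑ i, (pd i (fun y => (r₁ y • v₁ y) i) x
        - pd i (fun y => (r₂ y • v₂ y) i) x)) ^ 2 := by
        simp only [divg, Finset.sum_sub_distrib]
    _ ≤ 3 * ∑ i, (pd i (fun y => (r₁ y • v₁ y) i) x
        - pd i (fun y => (r₂ y • v₂ y) i) x) ^ 2 := by
        simp only [Fin.sum_univ_three]; exact three _ _ _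
    _ ≤ 3 * ∑ i, 4 * M ^ 2 * (pd i (fun y => r₁ y - r₂ y) x ^ 2 + (r₁ x - r₂ x) ^ 2
        + (v₁ x - v₂ x) i ^ 2 + pd i (fun y => (v₁ y - v₂ y) i) x ^ 2) :=
        mul_le_mul_of_nonneg_left (Finset.sum_le_sum fun i _ => key i) (by norm_num)
    _ = 12 * M ^ 2 * (∑ i, pd i (fun y => r₁ y - r₂ y) x ^ 2 + 3 * (r₁ x - r₂ x) ^ 2
        + ∑ i, (v₁ x - v₂ x) i ^ 2 + ∑ i, pd i (fun y => (v₁ y - v₂ y) i) x ^ 2) := by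
        simp only [Fin.sum_univ_three]; ring
    _ ≤ 12 * M ^ 2 * (3 * (((r₁ x - r₂ x) ^ 2 + ∑ i, pd i (fun y => r₁ y - r₂ y) x ^ 2) +
        ((∑ j, (v₁ x - v₂ x) j ^ 2) +
          ∑ i, ∑ j, pd i (fun y => (v₁ y - v₂ y) j) x ^ 2))) := by
        refine mul_le_mul_of_nonneg_left ?_ (by positivity)
        have p1 : 0 ≤ ∑ i, pd i (fun y => r₁ y - r₂ y) x ^ 2 :=
          Finset.sum_nonneg fun i _ => sq_nonneg _
        have p2 : 0 ≤ ∑ j, (v₁ x - v₂ x) j ^ 2 := Finset.sum_nonneg fun i _ => sq_nonneg _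
        have p3 : 0 ≤ ∑ i, pd i (fun y => (v₁ y - v₂ y) i) x ^ 2 :=
          Finset.sum_nonneg fun i _ => sq_nonneg _
        linarith
    _ = _ := by ring

/-- The constant in the differential inequality for the energy. -/
noncomputable def growthRate (ε M : ℝ) : ℝ := 1 + (1 + 1 / (2 * ε)) * (36 * M ^ 2)

/-- The differential inequality `E' ≤ K (E + N²)`, where `N` is the `W^{1,2}` norm of the velocity
difference. The term `ΔwF` (`F` the divergence of the flux difference) is absorbed by the
dissipation `-ε|Δw|²`. -/
theorem energy_deriv_le {ε M : ℝ} (hε : 0 < ε) {w p : (Fin 3 → ℝ) → ℝ}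
    {v : (Fin 3 → ℝ) → (Fin 3 → ℝ)} {F : (Fin 3 → ℝ) → ℝ}
    (hw : ContDiff ℝ 2 w) (pw : PeriodicSpace w) (hv : ContDiff ℝ 2 v) (hp : Continuous p)
    (heq : ∀ x, p x = ε * lap w x - F x)
    (hF : ∀ x, F x ^ 2 ≤ 36 * M ^ 2 * ((w x ^ 2 + ∑ i, pd i w x ^ 2) +
        ((∑ j, v x j ^ 2) + ∑ i, ∑ j, pd i (fun y => v y j) x ^ 2))) :
    ∫ x in box, p x * (2 * w x - 2 * lap w x) ≤
      growthRate ε M * (energy w + sobNormV v ^ 2) := by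
  set K := growthRate ε M with hK
  have cE := continuous_energyDensity hw
  have cj : ∀ j, ContDiff ℝ 2 fun y => v y j := fun j => contDiff_pi.1 hv j
  have cN : Continuous fun x => (∑ j, v x j ^ 2) + ∑ i, ∑ j, pd i (fun y => v y j) x ^ 2 :=
    (continuous_finsetSum _ fun j _ => (cj j).continuous.pow 2).add
      (continuous_finsetSum _ fun i _ => continuous_finsetSum _ fun j _ =>
        (continuous_pd ((cj j).of_le (by norm_num)) i).pow 2)
  have cG : Continuous fun x => w x * lap w x + ∑ i, pd i w x * pd i w x :=
    (hw.continuous.mul (continuous_lap hw)).add (continuous_finsetSum _ fun i _ =>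
      (continuous_pd (hw.of_le (by norm_num)) i).mul (continuous_pd (hw.of_le (by norm_num)) i))
  have cL : Continuous fun x => p x * (2 * w x - 2 * lap w x) :=
    hp.mul ((hw.continuous.const_mul 2).sub ((continuous_lap hw).const_mul 2))
  have hN : sobNormV v ^ 2 =
      ∫ x in box, ((∑ j, v x j ^ 2) + ∑ i, ∑ j, pd i (fun y => v y j) x ^ 2) :=
    Real.sq_sqrt (integral_nonneg fun x => by positivity)
  have green := integral_box_green hw hw pw pw
  have pointwise : ∀ x, p x * (2 * w x - 2 * lap w x) ≤
      2 * ε * (w x * lap w x + ∑ i, pd i w x * pd i w x) +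
      K * ((w x ^ 2 + ∑ i, pd i w x ^ 2) +
        ((∑ j, v x j ^ 2) + ∑ i, ∑ j, pd i (fun y => v y j) x ^ 2)) := by
    intro x
    have p1 : 0 ≤ ∑ i, pd i w x * pd i w x := Finset.sum_nonneg fun i _ => mul_self_nonneg _
    have p2 : 0 ≤ ∑ i, pd i w x ^ 2 := Finset.sum_nonneg fun i _ => sq_nonneg _
    have p3 : 0 ≤ (∑ j, v x j ^ 2) + ∑ i, ∑ j, pd i (fun y => v y j) x ^ 2 := by positivity
    have hFx := hF x
    set S := (∑ j, v x j ^ 2) + ∑ i, ∑ j, pd i (fun y => v y j) x ^ 2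
    set G := ∑ i, pd i w x ^ 2
    have young : 2 * (F x * lap w x) ≤ 1 / (2 * ε) * F x ^ 2 + 2 * ε * lap w x ^ 2 := by
      have h : 1 / (2 * ε) * F x ^ 2 + 2 * ε * lap w x ^ 2 - 2 * (F x * lap w x) =
          1 / (2 * ε) * (F x - 2 * ε * lap w x) ^ 2 := by field_simp; ring
      have h' : 0 ≤ 1 / (2 * ε) * (F x - 2 * ε * lap w x) ^ 2 := by positivity
      linarith
    have hc : (1 + 1 / (2 * ε)) * F x ^ 2 ≤
        (1 + 1 / (2 * ε)) * (36 * M ^ 2 * ((w x ^ 2 + G) + S)) :=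
      mul_le_mul_of_nonneg_left hFx (by positivity)
    have hKe : K * ((w x ^ 2 + G) + S) = ((w x ^ 2 + G) + S) +
        (1 + 1 / (2 * ε)) * (36 * M ^ 2 * ((w x ^ 2 + G) + S)) := by
      rw [hK, growthRate]; ring
    rw [heq x, hKe]
    have hp1 : 0 ≤ 2 * ε * ∑ i, pd i w x * pd i w x := by positivity
    nlinarith [sq_nonneg (F x + w x)]
  have cS : Continuous fun x => K * ((w x ^ 2 + ∑ i, pd i w x ^ 2) +
      ((∑ j, v x j ^ 2) + ∑ i, ∑ j, pd i (fun y => v y j) x ^ 2)) := (cE.add cN).const_mul K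
  have cR : Continuous fun x => 2 * ε * (w x * lap w x + ∑ i, pd i w x * pd i w x) +
      K * ((w x ^ 2 + ∑ i, pd i w x ^ 2) +
        ((∑ j, v x j ^ 2) + ∑ i, ∑ j, pd i (fun y => v y j) x ^ 2)) :=
    (cG.const_mul (2 * ε)).add cS
  calc _ ≤ _ := setIntegral_mono (integrableOn_box cL) (integrableOn_box cR) pointwise
    _ = _ := by
      rw [integral_add (integrableOn_box (cG.const_mul (2 * ε)))
        (integrableOn_box cS), integral_const_mul, integral_const_mul,
        green, integral_add (integrableOn_box cE) (integrableOn_box cN), hN, energy]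
      ring

/-- Grönwall's inequality, with the differential inequality required only at interior times. -/
theorem gronwall_interior {T K B : ℝ} {E E' : ℝ → ℝ} (hT : 0 ≤ T)
    (hE : ∀ t ∈ Icc (0 : ℝ) T, HasDerivWithinAt E (E' t) (Icc 0 T) t)
    (hle : ∀ t ∈ Ioo (0 : ℝ) T, E' t ≤ K * (E t + B)) (h0 : E 0 = 0)
    {t : ℝ} (ht : t ∈ Icc (0 : ℝ) T) : E t + B ≤ Real.exp (K * t) * B := by
  have hder : ∀ t ∈ Ioo (0 : ℝ) T, HasDerivAt (fun t => Real.exp (-K * t) * (E t + B))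
      (Real.exp (-K * t) * (E' t - K * (E t + B))) t := by
    intro t ht
    have h1 : HasDerivAt (fun t => Real.exp (-K * t)) (Real.exp (-K * t) * (-K * 1)) t :=
      ((hasDerivAt_id t).const_mul (-K)).exp
    have h2 := ((hE t (Ioo_subset_Icc_self ht)).hasDerivAt
      (Icc_mem_nhds ht.1 ht.2)).add_const B
    exact (h1.mul h2).congr_deriv (by ring)
  have hcont : ContinuousOn E (Icc 0 T) := fun t ht => (hE t ht).continuousWithinAt
  have hanti : AntitoneOn (fun t => Real.exp (-K * t) * (E t + B)) (Icc 0 T) := by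
    refine antitoneOn_of_deriv_nonpos (convex_Icc 0 T) ?_ ?_ ?_
    · exact (by fun_prop : ContinuousOn (fun t => Real.exp (-K * t)) (Icc 0 T)).mul
        (hcont.add continuousOn_const)
    · rw [interior_Icc]
      exact fun t ht => (hder t ht).differentiableAt.differentiableWithinAt
    · rw [interior_Icc]
      intro t ht
      rw [(hder t ht).deriv]
      exact mul_nonpos_of_nonneg_of_nonpos (Real.exp_pos _).le (sub_nonpos.2 (hle t ht))
  have h := hanti (left_mem_Icc.2 hT) ht ht.1
  simp only [mul_zero, Real.exp_zero, one_mul, h0, zero_add] at h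
  calc E t + B = Real.exp (K * t) * (Real.exp (-K * t) * (E t + B)) := by
        rw [← mul_assoc, ← Real.exp_add]; simp
    _ ≤ _ := mul_le_mul_of_nonneg_left h (Real.exp_pos _).le

theorem abs_le_of_sqrt_sum_le {ι : Type*} [Fintype ι] {a : ι → ℝ} {M : ℝ}
    (h : Real.sqrt (∑ i, a i ^ 2) ≤ M) (i : ι) : |a i| ≤ M :=
  (Real.abs_le_sqrt (Finset.single_le_sum (f := fun i => a i ^ 2)
    (fun _ _ => sq_nonneg _) (Finset.mem_univ i))).trans h

theorem abs_le_of_sqrt_sum_sum_le {a : Fin 3 → Fin 3 → ℝ} {M : ℝ}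
    (h : Real.sqrt (∑ i, ∑ j, a i j ^ 2) ≤ M) (i j : Fin 3) : |a i j| ≤ M := by
  rw [← Fintype.sum_prod_type' (fun i j => a i j ^ 2)] at h
  exact abs_le_of_sqrt_sum_le (a := fun q : Fin 3 × Fin 3 => a q.1 q.2) h (i, j)

/-- A pointwise `C¹` bound on both velocities bounds the `W^{1,2}` norm of their difference; it
makes the supremum over time on the right-hand side of the estimate a genuine one. -/
theorem sobNormV_sub_le {M : ℝ} {v₁ v₂ : (Fin 3 → ℝ) → (Fin 3 → ℝ)}
    (hv₁ : Differentiable ℝ v₁) (hv₂ : Differentiable ℝ v₂)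
    (b1 : ∀ x i, |v₁ x i| ≤ M) (b2 : ∀ x i, |v₂ x i| ≤ M)
    (d1 : ∀ x i j, |pd i (fun y => v₁ y j) x| ≤ M)
    (d2 : ∀ x i j, |pd i (fun y => v₂ y j) x| ≤ M) :
    sobNormV (fun x => v₁ x - v₂ x) ≤ Real.sqrt (12 * (2 * M) ^ 2) := by
  refine Real.sqrt_le_sqrt ?_
  have sq : ∀ a b : ℝ, |a| ≤ M → |b| ≤ M → (a - b) ^ 2 ≤ (2 * M) ^ 2 := fun a b ha hb => by
    rw [abs_le] at ha hb
    exact sq_le_sq' (by linarith) (by linarith)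
  have hb : ∀ x ∈ box, ‖(∑ j, (v₁ x - v₂ x) j ^ 2) +
      ∑ i, ∑ j, pd i (fun y => (v₁ y - v₂ y) j) x ^ 2‖ ≤ 12 * (2 * M) ^ 2 := by
    intro x _
    rw [Real.norm_of_nonneg (by positivity)]
    have e : ∀ i j, pd i (fun y => (v₁ y - v₂ y) j) x ^ 2 ≤ (2 * M) ^ 2 := fun i j => by
      have : pd i (fun y => (v₁ y - v₂ y) j) x =
          pd i (fun y => v₁ y j) x - pd i (fun y => v₂ y j) x :=
        pd_fun_sub i (differentiableAt_pi.1 (hv₁ x) j) (differentiableAt_pi.1 (hv₂ x) j)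
      rw [this]
      exact sq _ _ (d1 x i j) (d2 x i j)
    have e' : ∀ j, (v₁ x - v₂ x) j ^ 2 ≤ (2 * M) ^ 2 := fun j => sq _ _ (b1 x j) (b2 x j)
    calc _ ≤ (∑ _j : Fin 3, (2 * M) ^ 2) + ∑ _i : Fin 3, ∑ _j : Fin 3, (2 * M) ^ 2 :=
          add_le_add (Finset.sum_le_sum fun j _ => e' j)
            (Finset.sum_le_sum fun i _ => Finset.sum_le_sum fun j _ => e i j)
      _ = _ := by simp only [Fin.sum_univ_three]; ring
  have h := norm_setIntegral_le_of_norm_le_const (by rw [volume_box]; exact ENNReal.one_lt_top) hb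
  rw [Measure.real, volume_box, ENNReal.toReal_one, mul_one] at h
  exact (le_abs_self _).trans h

/-- Continuous dependence of the solution of the viscous continuity equation on the
transporting velocity field: with uniform `C²`/`C¹` bounds `M`, the `W^{1,2}(𝕋³)` distance
of two densities with the same initial datum is controlled, uniformly in time, by the
`W^{1,2}(𝕋³)` distance of the velocities, with a constant depending only on `ε, T, M`. -/
theorem viscous_continuity_stability
    (ε T M : ℝ) (hε : 0 < ε) (hT : 0 < T) (hM : 0 < M) :
    ∃ C : ℝ, ∀ (u₁ u₂ : ℝ → (Fin 3 → ℝ) → (Fin 3 → ℝ)) (ρ₁ ρ₂ : ℝ → (Fin 3 → ℝ) → ℝ),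
      RegVel T u₁ → RegVel T u₂ → RegDens T ρ₁ → RegDens T ρ₂ →
      SolvesViscousContinuity ε T ρ₁ u₁ → SolvesViscousContinuity ε T ρ₂ u₂ →
      (∀ x : Fin 3 → ℝ, ρ₁ 0 x = ρ₂ 0 x) →
      (∀ t ∈ Set.Icc (0:ℝ) T, ∀ x y : Fin 3 → ℝ,
        Real.sqrt (∑ j, u₁ t x j ^ 2)
          + Real.sqrt (∑ i, ∑ j, pd i (fun y' => u₁ t y' j) y ^ 2) ≤ M) →
      (∀ t ∈ Set.Icc (0:ℝ) T, ∀ x y : Fin 3 → ℝ,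
        Real.sqrt (∑ j, u₂ t x j ^ 2)
          + Real.sqrt (∑ i, ∑ j, pd i (fun y' => u₂ t y' j) y ^ 2) ≤ M) →
      (∀ t ∈ Set.Icc (0:ℝ) T, ∀ x y z : Fin 3 → ℝ,
        |ρ₁ t x| + Real.sqrt (∑ i, pd i (ρ₁ t) y ^ 2)
          + Real.sqrt (∑ i, ∑ j, pd i (pd j (ρ₁ t)) z ^ 2) ≤ M) →
      (∀ t ∈ Set.Icc (0:ℝ) T, ∀ x y z : Fin 3 → ℝ,
        |ρ₂ t x| + Real.sqrt (∑ i, pd i (ρ₂ t) y ^ 2)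
          + Real.sqrt (∑ i, ∑ j, pd i (pd j (ρ₂ t)) z ^ 2) ≤ M) →
      (⨆ t : Set.Icc (0:ℝ) T, sobNormS (fun x => ρ₁ ↑t x - ρ₂ ↑t x)) ≤
        C * ⨆ t : Set.Icc (0:ℝ) T, sobNormV (fun x => u₁ ↑t x - u₂ ↑t x) := by
  set K := growthRate ε M with hK
  have hK0 : 0 ≤ K := by rw [hK, growthRate]; positivity
  refine ⟨Real.sqrt (Real.exp (K * T)), ?_⟩
  intro u₁ u₂ ρ₁ ρ₂ hu₁ hu₂ hρ₁ hρ₂ hs₁ hs₂ h0 hb₁ hb₂ _ hc₂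
  have : Nonempty (Icc (0 : ℝ) T) := ⟨⟨0, left_mem_Icc.2 hT.le⟩⟩
  set D := ⨆ t : Icc (0 : ℝ) T, sobNormV (fun x => u₁ ↑t x - u₂ ↑t x) with hD
  have du₁ : ∀ t ∈ Icc (0 : ℝ) T, Differentiable ℝ (u₁ t) := fun t ht =>
    (hu₁.smoothSpace t ht).differentiable (by norm_num)
  have du₂ : ∀ t ∈ Icc (0 : ℝ) T, Differentiable ℝ (u₂ t) := fun t ht =>
    (hu₂.smoothSpace t ht).differentiable (by norm_num)
  have bu : ∀ u : ℝ → (Fin 3 → ℝ) → (Fin 3 → ℝ),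
      (∀ t ∈ Icc (0:ℝ) T, ∀ x y : Fin 3 → ℝ, Real.sqrt (∑ j, u t x j ^ 2)
          + Real.sqrt (∑ i, ∑ j, pd i (fun y' => u t y' j) y ^ 2) ≤ M) →
      ∀ t ∈ Icc (0:ℝ) T, (∀ x i, |u t x i| ≤ M) ∧
        ∀ x i j, |pd i (fun y => u t y j) x| ≤ M := by
    intro u h t ht
    refine ⟨fun x i => abs_le_of_sqrt_sum_le ?_ i, fun x i j =>
      abs_le_of_sqrt_sum_sum_le (a := fun i j => pd i (fun y => u t y j) x) ?_ i j⟩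
    · exact (le_add_of_nonneg_right (Real.sqrt_nonneg _)).trans (h t ht x x)
    · exact (le_add_of_nonneg_left (Real.sqrt_nonneg _)).trans (h t ht x x)
  have bu₁ := bu u₁ hb₁
  have bu₂ := bu u₂ hb₂
  have bdd : BddAbove (range fun t : Icc (0 : ℝ) T => sobNormV (fun x => u₁ ↑t x - u₂ ↑t x)) := by
    refine ⟨Real.sqrt (12 * (2 * M) ^ 2), ?_⟩
    rintro _ ⟨⟨t, ht⟩, rfl⟩
    exact sobNormV_sub_le (du₁ t ht) (du₂ t ht) (bu₁ t ht).1 (bu₂ t ht).1 (bu₁ t ht).2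
      (bu₂ t ht).2
  have hN : ∀ t ∈ Icc (0 : ℝ) T, sobNormV (fun x => u₁ t x - u₂ t x) ≤ D := fun t ht =>
    le_ciSup bdd ⟨t, ht⟩
  have hD0 : 0 ≤ D := (Real.sqrt_nonneg _).trans (hN 0 (left_mem_Icc.2 hT.le))
  have hw := hρ₁.fun_sub hρ₂
  have hle : ∀ t ∈ Ioo (0 : ℝ) T, (∫ x in box, deriv (fun r => ρ₁ r x - ρ₂ r x) t *
      (2 * (ρ₁ t x - ρ₂ t x) - 2 * lap (fun x => ρ₁ t x - ρ₂ t x) x)) ≤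
      K * (energy (fun x => ρ₁ t x - ρ₂ t x) + D ^ 2) := by
    intro t ht
    have ht' := Ioo_subset_Icc_self ht
    have hp : Continuous fun x => deriv (fun r => ρ₁ r x - ρ₂ r x) t := by
      have := hw.contT.comp (f := fun x : Fin 3 → ℝ => (t, x)) (s := univ) (by fun_prop)
        fun x _ => ⟨ht', mem_univ _⟩
      exact continuousOn_univ.1 this
    refine (energy_deriv_le (M := M) hε (hw.smoothSpace t ht') (hw.periodic t ht')
      ((hu₁.smoothSpace t ht').sub (hu₂.smoothSpace t ht')) hp
      (F := fun x => divg (fun y => ρ₁ t y • u₁ t y) x - divg (fun y => ρ₂ t y • u₂ t y) x)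
      (fun x => ?_) (fun x => ?_)).trans ?_
    · have hlap : lap (fun x => ρ₁ t x - ρ₂ t x) x = lap (ρ₁ t) x - lap (ρ₂ t) x := by
        simp only [lap, pd_pd_fun_sub (hρ₁.smoothSpace t ht') (hρ₂.smoothSpace t ht'),
          Finset.sum_sub_distrib]
      rw [hlap, deriv_fun_sub (hρ₁.diffTime x t ht') (hρ₂.diffTime x t ht')]
      linarith [hs₁ t ht x, hs₂ t ht x]
    · have h := hc₂ t ht' x x x
      have q1 := Real.sqrt_nonneg (∑ i, pd i (ρ₂ t) x ^ 2)
      have q2 := Real.sqrt_nonneg (∑ i, ∑ j, pd i (pd j (ρ₂ t)) x ^ 2)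
      have q3 := abs_nonneg (ρ₂ t x)
      exact flux_sq_le ((hρ₁.smoothSpace t ht').differentiable (by norm_num))
        ((hρ₂.smoothSpace t ht').differentiable (by norm_num)) (du₁ t ht') (du₂ t ht') x
        ((bu₁ t ht').1 x) (fun i => (bu₁ t ht').2 x i i) (by linarith)
        (abs_le_of_sqrt_sum_le (a := fun i => pd i (ρ₂ t) x) (by linarith))
    · refine mul_le_mul_of_nonneg_left (add_le_add_right ?_ _) hK0
      exact pow_le_pow_left₀ (Real.sqrt_nonneg _) (hN t ht') 2
  have hE0 : energy (fun x => ρ₁ 0 x - ρ₂ 0 x) = 0 := by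
    simp [energy, h0, pd]
  refine ciSup_le fun ⟨t, ht⟩ => ?_
  have hg := gronwall_interior hT.le (fun s hs => hasDerivWithinAt_energy hw hs) hle hE0 ht
  have hexp : Real.exp (K * t) ≤ Real.exp (K * T) :=
    Real.exp_le_exp.2 (mul_le_mul_of_nonneg_left ht.2 hK0)
  have hfin : energy (fun x => ρ₁ t x - ρ₂ t x) ≤ Real.exp (K * T) * D ^ 2 := by
    have := mul_le_mul_of_nonneg_right hexp (sq_nonneg D)
    linarith [sq_nonneg D]
  calc sobNormS (fun x => ρ₁ t x - ρ₂ t x) ≤ Real.sqrt (Real.exp (K * T) * D ^ 2) :=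
        Real.sqrt_le_sqrt hfin
    _ = Real.sqrt (Real.exp (K * T)) * D := by
        rw [Real.sqrt_mul (Real.exp_pos _).le, Real.sqrt_sq hD0]
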